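/- Let d ≥ 2 and let (r₁,r₂,r₃) be a strictly admissible triple of positive reals. There exists a sequence (Λ_n)_{n≥0} of nonnegative reals with Λ_n → 0 as n → ∞ such that for each n ≥ 0 and all triples (G₁,G₂,G₃) of real spherical harmonics of degree n on S^{d−1}, |Q(G₁,G₂,G₃)| ≤ Λ_n · Σ_{j=1}^3 ‖G_j‖²_{L²(S^{d−1})}. -/

import Mathlib

/-!
The decay comes from Bessel's inequality, and no quantitative information on the kernels is needed.
With `K` the indicator kernel of `Q_k`, one has `Q_k(F,G) = ⟪F ⊗ G, K⟫` in `L²(S^{d-1} × S^{d-1})`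
(`Qform_eq_inner`), and `K` is bounded on a space of finite measure. Since spherical harmonics of
different degrees are orthogonal, any choice of pairs `(F_n, G_n)` of harmonics of degree `n` gives
an orthogonal sequence `F_n ⊗ G_n`, so the coefficients of `K` against the normalized tensors tend
to zero. Hence for each `ε > 0` only finitely many degrees contain a pair with
`|Q_k(F,G)| > ε (‖F‖² + ‖G‖²)` (`Qform_small`). The best constant `Λ_n` in degree `n` is finite by
Cauchy–Schwarz (`Qform_bdd`) and therefore tends to zero.

Orthogonality (`harmonic_orthogonal`) is proved with the Gaussian weight `exp (-|x|²/2)` on `ℝ^d`.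
For harmonic homogeneous `P`, `Q` of degrees `n`, `m`, the field `P ∇Q - Q ∇P` is divergence free
and its product with `x` is `(m - n) P Q`, so Gaussian integration by parts (`gauss_ibp`) yields
`(m - n) ∫ P Q exp (-|x|²/2) = 0`; polar coordinates (`polar_gauss`) turn this into the integral
over the sphere times a nonzero radial factor.
-/

open MeasureTheory Set

noncomputable section

/-- `ℝ^d` with Lebesgue measure. -/
abbrev Vec (d : ℕ) := EuclideanSpace ℝ (Fin d)

/-- The rotation-invariant measure `σ` on the unit sphere `S^{d-1}`, normalized so that
Lebesgue measure equals `r^{d-1} dr dσ(θ)` in polar coordinates. -/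
def sphereMeasure (d : ℕ) : Measure (Metric.sphere (0 : Vec d) 1) :=
  (volume : Measure (Vec d)).toSphere

/-- `G` is (the restriction to the unit sphere of) a real spherical harmonic of degree `n`:
a homogeneous polynomial of degree `n` with vanishing Laplacian. -/
def IsSphericalHarmonic (d n : ℕ) (G : Vec d → ℝ) : Prop :=
  ∃ P : MvPolynomial (Fin d) ℝ, P.IsHomogeneous n ∧
    (∑ i : Fin d, MvPolynomial.pderiv i (MvPolynomial.pderiv i P)) = 0 ∧
    ∀ x : Vec d, ‖x‖ = 1 → G x = MvPolynomial.eval (fun i => x i) P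

/-- The bilinear form `Q_k(F,G) = ∫∫ F(x) G(y) 1_{|r_i x + r_j y| ≤ r_k} dσ(x) dσ(y)`. -/
def Qform {d : ℕ} (r : Fin 3 → ℝ) (i j k : Fin 3) (F G : Vec d → ℝ) : ℝ :=
  ∫ x : Metric.sphere (0 : Vec d) 1, ∫ y : Metric.sphere (0 : Vec d) 1,
    F x * G y * (if ‖r i • (x : Vec d) + r j • (y : Vec d)‖ ≤ r k then (1:ℝ) else 0)
  ∂(sphereMeasure d) ∂(sphereMeasure d)

/-- `Q(F₁,F₂,F₃) = Q₁(F₂,F₃) + Q₂(F₃,F₁) + Q₃(F₁,F₂)` (indices taken as `0,1,2`). -/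
def Qtot {d : ℕ} (r : Fin 3 → ℝ) (F : Fin 3 → Vec d → ℝ) : ℝ :=
  Qform r 1 2 0 (F 1) (F 2) + Qform r 2 0 1 (F 2) (F 0) + Qform r 0 1 2 (F 0) (F 1)

/-- The squared `L²(S^{d-1})` norm. -/
def L2sq {d : ℕ} (G : Vec d → ℝ) : ℝ :=
  ∫ θ : Metric.sphere (0 : Vec d) 1, (G θ) ^ 2 ∂(sphereMeasure d)

/-- A triple of positive reals is strictly admissible. -/
def StrictlyAdmissible (r : Fin 3 → ℝ) : Prop :=
  (∀ j, 0 < r j) ∧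
  (∀ i j k : Fin 3, ({i, j, k} : Set (Fin 3)) = Set.univ → r k < r i + r j)

/-! ### Polynomials against the Gaussian weight -/

open MvPolynomial in
/-- Total derivative of a polynomial function on Euclidean space. -/
lemma hasFDerivAt_evalPoly {d : ℕ} (P : MvPolynomial (Fin d) ℝ) (x : Vec d) :
    HasFDerivAt (fun y : Vec d => eval (fun i => y i) P)
      (∑ i, eval (fun i => x i) (pderiv i P) • (EuclideanSpace.proj i : Vec d →L[ℝ] ℝ)) x := by
  induction P using MvPolynomial.induction_on with
  | C a => simpa using hasFDerivAt_const a x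
  | add p q hp hq =>
    have h := HasFDerivAt.fun_add hp hq
    simp only [map_add]
    refine h.congr_fderiv ?_
    simp [add_smul, Finset.sum_add_distrib]
  | mul_X p j hp =>
    have hX : HasFDerivAt (fun y : Vec d => y j) (EuclideanSpace.proj j : Vec d →L[ℝ] ℝ) x :=
      (EuclideanSpace.proj j : Vec d →L[ℝ] ℝ).hasFDerivAt
    have h := HasFDerivAt.fun_mul hp hX
    simp only [map_mul, eval_X]
    refine h.congr_fderiv ?_
    simp only [Derivation.leibniz, pderiv_X, smul_eq_mul, map_add, map_mul, eval_X, add_smul,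
      Finset.sum_add_distrib, Finset.smul_sum, mul_smul]
    congr 1
    rw [Finset.sum_eq_single j]
    · simp
    · intro b _ hb
      simp [Pi.single_eq_of_ne' hb]
    · simp

lemma continuous_evalPoly {d : ℕ} (P : MvPolynomial (Fin d) ℝ) :
    Continuous (fun y : Vec d => MvPolynomial.eval (fun i => y i) P) := by
  rw [continuous_iff_continuousAt]
  exact fun x => (hasFDerivAt_evalPoly P x).continuousAt

/-- The Gaussian weight `exp (-|x|² / 2)`. -/
def gaussWeight {d : ℕ} (x : Vec d) : ℝ := Real.exp (-(1 / 2) * ‖x‖ ^ 2)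

lemma hasFDerivAt_gaussWeight {d : ℕ} (x : Vec d) :
    HasFDerivAt (gaussWeight (d := d)) (-gaussWeight x • innerSL ℝ x) x := by
  have h := ((hasStrictFDerivAt_norm_sq x).hasFDerivAt.const_mul (-(1 / 2) : ℝ)).exp
  refine h.congr_fderiv ?_
  ext v
  simp [gaussWeight]

/-- Gaussian moments are finite, by Fubini on monomials. -/
lemma integrable_poly_mul_gauss {d : ℕ} (P : MvPolynomial (Fin d) ℝ) :
    Integrable (fun x : Vec d => MvPolynomial.eval (fun i => x i) P * gaussWeight x) := by
  induction P using MvPolynomial.induction_on' with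
  | add p q hp hq =>
    have := hp.add hq
    refine this.congr (Filter.Eventually.of_forall fun x => ?_)
    simp [add_mul]
  | monomial m a =>
    have h1 : Integrable (fun x : Fin d → ℝ => ∏ i, (x i ^ m i * Real.exp (-(1 / 2) * x i ^ 2))) := by
      refine Integrable.fintype_prod (f := fun i (t : ℝ) => t ^ m i * Real.exp (-(1 / 2) * t ^ 2))
        (fun i => ?_)
      have := integrable_rpow_mul_exp_neg_mul_sq (b := 1 / 2) (by norm_num) (s := m i)
        (by have : (0 : ℝ) ≤ m i := by positivity
            linarith)
      simpa using this
    have h2 := (PiLp.volume_preserving_ofLp (Fin d)).integrable_comp_of_integrable h1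
    refine (h2.const_mul a).congr (Filter.Eventually.of_forall fun x => ?_)
    simp only [Function.comp, MvPolynomial.eval_monomial, gaussWeight, EuclideanSpace.norm_sq_eq,
      Finset.prod_mul_distrib, Finset.mul_sum, Real.exp_sum, Real.norm_eq_abs, sq_abs,
      Finsupp.prod_fintype _ _ (fun _ => pow_zero _)]
    ring

/-- Gaussian integration by parts (Stein's identity) for polynomials. -/
lemma gauss_ibp {d : ℕ} (P : MvPolynomial (Fin d) ℝ) (i : Fin d) :
    ∫ x : Vec d, MvPolynomial.eval (fun i => x i) (MvPolynomial.X i * P) * gaussWeight x =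
    ∫ x : Vec d, MvPolynomial.eval (fun i => x i) (MvPolynomial.pderiv i P) * gaussWeight x := by
  have hf' : ∀ x : Vec d, fderiv ℝ (fun y : Vec d => MvPolynomial.eval (fun i => y i) P) x
      (EuclideanSpace.single i 1) = MvPolynomial.eval (fun i => x i) (MvPolynomial.pderiv i P) := by
    intro x
    rw [(hasFDerivAt_evalPoly P x).fderiv]
    simp
  have hg' : ∀ x : Vec d, fderiv ℝ (gaussWeight (d := d)) x (EuclideanSpace.single i 1)
      = -(x i * gaussWeight x) := by
    intro x
    rw [(hasFDerivAt_gaussWeight x).fderiv]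
    simp [EuclideanSpace.inner_single_right, mul_comm]
  have e : ∀ x : Vec d, MvPolynomial.eval (fun i => x i) P * -(x i * gaussWeight x)
      = -(MvPolynomial.eval (fun i => x i) (MvPolynomial.X i * P) * gaussWeight x) := by
    intro x
    simp
    ring
  have := integral_mul_fderiv_eq_neg_fderiv_mul_of_integrable (μ := (volume : Measure (Vec d)))
    (f := fun y : Vec d => MvPolynomial.eval (fun i => y i) P) (g := gaussWeight (d := d))
    (v := EuclideanSpace.single i 1) ?_ ?_ (integrable_poly_mul_gauss P)
    (fun x _ => (hasFDerivAt_evalPoly P x).differentiableAt)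
    (fun x _ => (hasFDerivAt_gaussWeight x).differentiableAt)
  · simp only [hf', hg', e, integral_neg, neg_inj] at this
    exact this
  · simp only [hf']
    exact integrable_poly_mul_gauss _
  · simp only [hg', e]
    exact (integrable_poly_mul_gauss _).neg

open MvPolynomial in
/-- Gaussian integration by parts applied to the field `P ∇Q - Q ∇P`, which is divergence free
when `P` and `Q` are harmonic and whose product with `x` is `(m - n) P Q` by Euler's identity. -/
lemma gauss_orthogonal {d n m : ℕ} (hnm : n ≠ m) {P Q : MvPolynomial (Fin d) ℝ}
    (hP : P.IsHomogeneous n) (hQ : Q.IsHomogeneous m)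
    (hP' : ∑ i : Fin d, pderiv i (pderiv i P) = 0)
    (hQ' : ∑ i : Fin d, pderiv i (pderiv i Q) = 0) :
    ∫ x : Vec d, eval (fun i => x i) (P * Q) * gaussWeight x = 0 := by
  have key : ∑ i : Fin d, X i * (P * pderiv i Q - Q * pderiv i P) =
      ((m : ℝ) - n) • (P * Q) := by
    have h1 := hP.sum_X_mul_pderiv
    have h2 := hQ.sum_X_mul_pderiv
    calc _ = P * (∑ i : Fin d, X i * pderiv i Q) - Q * ∑ i : Fin d, X i * pderiv i P := by
          rw [Finset.mul_sum, Finset.mul_sum, ← Finset.sum_sub_distrib]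
          exact Finset.sum_congr rfl fun i _ => by ring
      _ = _ := by
          rw [h1, h2, sub_smul, MvPolynomial.smul_eq_C_mul, MvPolynomial.smul_eq_C_mul]
          simp only [nsmul_eq_mul, map_natCast]
          ring
  have key2 : ∑ i : Fin d, pderiv i (P * pderiv i Q - Q * pderiv i P) = 0 := by
    calc _ = P * (∑ i : Fin d, pderiv i (pderiv i Q)) - Q * ∑ i : Fin d, pderiv i (pderiv i P) := by
          rw [Finset.mul_sum, Finset.mul_sum, ← Finset.sum_sub_distrib]
          refine Finset.sum_congr rfl fun i _ => ?_
          simp only [map_sub, Derivation.leibniz, smul_eq_mul]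
          ring
      _ = 0 := by rw [hP', hQ']; simp
  have sumI : ∀ f : Fin d → MvPolynomial (Fin d) ℝ,
      ∫ x : Vec d, eval (fun i => x i) (∑ i, f i) * gaussWeight x =
      ∑ i, ∫ x : Vec d, eval (fun i => x i) (f i) * gaussWeight x := by
    intro f
    rw [← integral_finsetSum _ (fun i _ => integrable_poly_mul_gauss (f i))]
    simp only [map_sum, Finset.sum_mul]
  have h := sumI (fun i => X i * (P * pderiv i Q - Q * pderiv i P))
  simp only [gauss_ibp] at h
  rw [← sumI, key, key2] at h
  simp only [smul_eval, mul_assoc, integral_const_mul, map_zero, zero_mul, integral_zero] at h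
  rcases mul_eq_zero.mp h with h | h
  · exact absurd (by exact_mod_cast (sub_eq_zero.mp h).symm) hnm
  · simpa [mul_assoc] using h

/-! ### Orthogonality on the sphere -/

lemma eval_homogeneous_smul {d k : ℕ} {R : MvPolynomial (Fin d) ℝ} (hR : R.IsHomogeneous k)
    (c : ℝ) (y : Fin d → ℝ) :
    MvPolynomial.eval (fun i => c * y i) R = c ^ k * MvPolynomial.eval y R := by
  rw [MvPolynomial.eval_eq', MvPolynomial.eval_eq', Finset.mul_sum]
  refine Finset.sum_congr rfl fun m hm => ?_
  have h : ∑ i, m i = k := by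
    rw [← hR (MvPolynomial.mem_support_iff.mp hm), Finsupp.weight_apply]
    simp [Finsupp.sum_fintype]
  simp only [mul_pow, Finset.prod_mul_distrib, Finset.prod_pow_eq_pow_sum, h]
  ring

/-- In polar coordinates the Gaussian integral of a homogeneous polynomial factors. -/
lemma polar_gauss {d k : ℕ} (hd : 0 < d) {R : MvPolynomial (Fin d) ℝ} (hR : R.IsHomogeneous k) :
    ∫ x : Vec d, MvPolynomial.eval (fun i => x i) R * gaussWeight x =
    (∫ θ : Metric.sphere (0 : Vec d) 1, MvPolynomial.eval (fun i => (θ : Vec d) i) R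
      ∂(sphereMeasure d)) *
    ∫ ρ : Ioi (0 : ℝ), (ρ : ℝ) ^ k * Real.exp (-(1 / 2) * (ρ : ℝ) ^ 2)
      ∂(Measure.volumeIoiPow (Module.finrank ℝ (Vec d) - 1)) := by
  have : Nonempty (Fin d) := ⟨⟨0, hd⟩⟩
  rw [sphereMeasure, ← integral_prod_mul,
    ← (volume : Measure (Vec d)).measurePreserving_homeomorphUnitSphereProd.integral_comp
        (Homeomorph.measurableEmbedding _)]
  have h0 : ∫ x : Vec d, MvPolynomial.eval (fun i => x i) R * gaussWeight x =
      ∫ x : ({(0 : Vec d)}ᶜ : Set (Vec d)), MvPolynomial.eval (fun i => x.1 i) R * gaussWeight x.1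
        ∂((volume : Measure (Vec d)).comap (↑)) := by
    rw [integral_subtype_comap (measurableSet_singleton _).compl
      fun x : Vec d => MvPolynomial.eval (fun i => x i) R * gaussWeight x,
      restrict_compl_singleton]
  rw [h0]
  refine integral_congr_ae (Filter.Eventually.of_forall fun x => ?_)
  have hx : ‖(x : Vec d)‖ ≠ 0 := norm_ne_zero_iff.mpr x.2
  have e := eval_homogeneous_smul hR ‖(x : Vec d)‖⁻¹ (fun i => x.1 i)
  simp only [homeomorphUnitSphereProd_apply_fst_coe, homeomorphUnitSphereProd_apply_snd_coe,
    PiLp.smul_apply, smul_eq_mul, e, gaussWeight, inv_pow]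
  field_simp

/-- The radial factor of `polar_gauss` is a value of the Gamma function up to a positive factor. -/
lemma radial_ne_zero (k m : ℕ) :
    ∫ ρ : Ioi (0 : ℝ), (ρ : ℝ) ^ k * Real.exp (-(1 / 2) * (ρ : ℝ) ^ 2)
      ∂(Measure.volumeIoiPow m) ≠ 0 := by
  simp only [Measure.volumeIoiPow, ENNReal.ofReal]
  rw [integral_withDensity_eq_integral_smul
      ((measurable_subtype_coe.pow_const _).real_toNNReal),
    integral_subtype_comap measurableSet_Ioi fun a : ℝ =>
      Real.toNNReal (a ^ m) • (a ^ k * Real.exp (-(1 / 2) * a ^ 2)),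
    setIntegral_congr_fun (g := fun x : ℝ => x ^ ((m + k : ℕ) : ℝ) *
      Real.exp (-(1 / 2) * x ^ (2 : ℝ))) measurableSet_Ioi fun x hx => ?_]
  · have hq : (-1 : ℝ) < ((m + k : ℕ) : ℝ) := by
      have : (0 : ℝ) ≤ ((m + k : ℕ) : ℝ) := by positivity
      linarith
    rw [integral_rpow_mul_exp_neg_mul_rpow (by norm_num) hq (by norm_num)]
    have := Real.Gamma_pos_of_pos (s := (((m + k : ℕ) : ℝ) + 1) / 2) (by positivity)
    positivity
  · have hx' : (0 : ℝ) ≤ x := le_of_lt hx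
    simp only [NNReal.smul_def, Real.coe_toNNReal _ (pow_nonneg hx' _), smul_eq_mul,
      Real.rpow_natCast, Real.rpow_ofNat]
    ring

lemma harmonic_continuous {d n : ℕ} {F : Vec d → ℝ} (hF : IsSphericalHarmonic d n F) :
    Continuous (fun θ : Metric.sphere (0 : Vec d) 1 => F θ) := by
  obtain ⟨P, _, _, h⟩ := hF
  refine ((continuous_evalPoly P).comp continuous_subtype_val).congr fun θ => ?_
  exact (h θ (by simp)).symm

/-- Spherical harmonics of different degrees are orthogonal in `L²(S^{d-1})`. -/
lemma harmonic_orthogonal {d n m : ℕ} (hd : 0 < d) (hnm : n ≠ m) {F G : Vec d → ℝ}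
    (hF : IsSphericalHarmonic d n F) (hG : IsSphericalHarmonic d m G) :
    ∫ θ : Metric.sphere (0 : Vec d) 1, F θ * G θ ∂(sphereMeasure d) = 0 := by
  obtain ⟨P, hP, hP', h⟩ := hF
  obtain ⟨Q, hQ, hQ', h'⟩ := hG
  have h1 := gauss_orthogonal hnm hP hQ hP' hQ'
  rw [polar_gauss hd (hP.mul hQ)] at h1
  have h2 := (mul_eq_zero.mp h1).resolve_right (radial_ne_zero _ _)
  rw [← h2]
  refine integral_congr_ae (Filter.Eventually.of_forall fun θ => ?_)
  simp [h θ (by simp), h' θ (by simp)]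

/-! ### The forms as inner products with a fixed kernel -/

/-- Bessel's inequality for an orthogonal, not normalized (possibly vanishing) family. -/
lemma finite_bad {H : Type*} [NormedAddCommGroup H] [InnerProductSpace ℝ H]
    (v : ℕ → H) (hv : ∀ n m, n ≠ m → inner ℝ (v n) (v m) = 0) (κ : H) {ε : ℝ} (hε : 0 < ε) :
    {n | ε * ‖v n‖ < |inner ℝ (v n) κ|}.Finite := by
  set B := {n | ε * ‖v n‖ < |inner ℝ (v n) κ|} with hB
  have hne : ∀ n ∈ B, v n ≠ 0 := by
    intro n hn h0
    simp [hB, h0] at hn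
  have horth : Orthonormal ℝ (fun n : B => (‖v n‖⁻¹ : ℝ) • v n) := by
    refine ⟨fun n => norm_smul_inv_norm (𝕜 := ℝ) (hne n n.2), fun n m h => ?_⟩
    have : (n : ℕ) ≠ m := fun h' => h (Subtype.ext h')
    simp [inner_smul_left, inner_smul_right, hv n m this]
  have hs := (horth.inner_products_summable κ).tendsto_cofinite_zero
  have hev := hs.eventually_lt_const (show (0 : ℝ) < ε ^ 2 by positivity)
  rw [Filter.eventually_cofinite] at hev
  have huniv : {n : B | ¬ ‖inner ℝ ((‖v n‖⁻¹ : ℝ) • v n) κ‖ ^ 2 < ε ^ 2} = univ := by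
    ext n
    simp only [mem_ofPred_eq, mem_univ, iff_true, not_lt]
    have h1 : 0 < ‖v n‖ := norm_pos_iff.mpr (hne n n.2)
    have h2 : ε * ‖v n‖ < |inner ℝ (v n) κ| := n.2
    refine pow_le_pow_left₀ hε.le ?_ 2
    rw [inner_smul_left, norm_mul, Real.norm_eq_abs, Real.norm_eq_abs]
    simp only [RCLike.conj_to_real, abs_inv, abs_norm]
    rw [inv_mul_eq_div, le_div_iff₀ h1]
    exact h2.le
  rw [huniv] at hev
  exact Set.finite_coe_iff.mp (Set.finite_univ_iff.mp hev)

instance sphereMeasure_finite (d : ℕ) : IsFiniteMeasure (sphereMeasure d) :=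
  inferInstanceAs (IsFiniteMeasure (volume : Measure (Vec d)).toSphere)

/-- The indicator kernel of `Qform`, as a function on `S^{d-1} × S^{d-1}`. -/
def sphereKernel {d : ℕ} (r : Fin 3 → ℝ) (i j k : Fin 3)
    (z : Metric.sphere (0 : Vec d) 1 × Metric.sphere (0 : Vec d) 1) : ℝ :=
  if ‖r i • (z.1 : Vec d) + r j • (z.2 : Vec d)‖ ≤ r k then (1 : ℝ) else 0

lemma memLp_sphereKernel {d : ℕ} (r : Fin 3 → ℝ) (i j k : Fin 3) :
    MemLp (sphereKernel (d := d) r i j k) 2 ((sphereMeasure d).prod (sphereMeasure d)) := by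
  have hm : Measurable (sphereKernel (d := d) r i j k) := by
    refine Measurable.ite ?_ measurable_const measurable_const
    exact measurableSet_le (by fun_prop) measurable_const
  refine MemLp.of_bound hm.aestronglyMeasurable 1 (Filter.Eventually.of_forall fun z => ?_)
  unfold sphereKernel
  split_ifs <;> simp

lemma memLp_tensor {d : ℕ} {F G : Vec d → ℝ}
    (hF : Continuous (fun θ : Metric.sphere (0 : Vec d) 1 => F θ))
    (hG : Continuous (fun θ : Metric.sphere (0 : Vec d) 1 => G θ)) :
    MemLp (fun z : Metric.sphere (0 : Vec d) 1 × Metric.sphere (0 : Vec d) 1 => F z.1 * G z.2) 2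
      ((sphereMeasure d).prod (sphereMeasure d)) := by
  have hc : Continuous (fun z : Metric.sphere (0 : Vec d) 1 × Metric.sphere (0 : Vec d) 1 =>
      F z.1 * G z.2) := (hF.comp continuous_fst).mul (hG.comp continuous_snd)
  obtain ⟨C, hC⟩ := isCompact_univ.exists_bound_of_continuousOn hc.continuousOn
  exact MemLp.of_bound hc.aestronglyMeasurable C
    (Filter.Eventually.of_forall fun z => hC z (mem_univ z))

lemma inner_toLp {X : Type*} [MeasurableSpace X] {μ : Measure X} {f g : X → ℝ}
    (hf : MemLp f 2 μ) (hg : MemLp g 2 μ) :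
    inner ℝ (hf.toLp f) (hg.toLp g) = ∫ x, f x * g x ∂μ := by
  rw [L2.inner_def]
  refine integral_congr_ae ?_
  filter_upwards [hf.coeFn_toLp, hg.coeFn_toLp] with x h1 h2
  simp [h1, h2, mul_comm]

/-- `Q_k(F,G) = ⟪F ⊗ G, K⟫` in `L²(S^{d-1} × S^{d-1})`. -/
lemma Qform_eq_inner {d : ℕ} (r : Fin 3 → ℝ) (i j k : Fin 3) {F G : Vec d → ℝ}
    (hF : Continuous (fun θ : Metric.sphere (0 : Vec d) 1 => F θ))
    (hG : Continuous (fun θ : Metric.sphere (0 : Vec d) 1 => G θ)) :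
    Qform r i j k F G = inner ℝ ((memLp_tensor hF hG).toLp _)
      ((memLp_sphereKernel (d := d) r i j k).toLp _) := by
  rw [inner_toLp, integral_prod]
  · rfl
  · exact (memLp_tensor hF hG).integrable_mul (memLp_sphereKernel r i j k)

lemma inner_tensor {d : ℕ} {F G F' G' : Vec d → ℝ}
    (hF : Continuous (fun θ : Metric.sphere (0 : Vec d) 1 => F θ))
    (hG : Continuous (fun θ : Metric.sphere (0 : Vec d) 1 => G θ))
    (hF' : Continuous (fun θ : Metric.sphere (0 : Vec d) 1 => F' θ))
    (hG' : Continuous (fun θ : Metric.sphere (0 : Vec d) 1 => G' θ)) :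
    inner ℝ ((memLp_tensor hF hG).toLp _) ((memLp_tensor hF' hG').toLp _) =
      (∫ θ : Metric.sphere (0 : Vec d) 1, F θ * F' θ ∂(sphereMeasure d)) *
      ∫ θ : Metric.sphere (0 : Vec d) 1, G θ * G' θ ∂(sphereMeasure d) := by
  rw [inner_toLp, ← integral_prod_mul]
  exact integral_congr_ae (Filter.Eventually.of_forall fun z => by simp only; ring)

lemma L2sq_nonneg {d : ℕ} (F : Vec d → ℝ) : 0 ≤ L2sq F :=
  integral_nonneg fun _ => sq_nonneg _

/-- `‖F ⊗ G‖ = ‖F‖ ‖G‖`, which is at most the sum of the squares. -/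
lemma norm_tensor_le {d : ℕ} {F G : Vec d → ℝ}
    (hF : Continuous (fun θ : Metric.sphere (0 : Vec d) 1 => F θ))
    (hG : Continuous (fun θ : Metric.sphere (0 : Vec d) 1 => G θ)) :
    ‖(memLp_tensor hF hG).toLp _‖ ≤ L2sq F + L2sq G := by
  have h : ‖(memLp_tensor hF hG).toLp _‖ ^ 2 = L2sq F * L2sq G := by
    rw [← real_inner_self_eq_norm_sq, inner_tensor hF hG hF hG, L2sq, L2sq]
    simp only [sq]
  have h1 := L2sq_nonneg F
  have h2 := L2sq_nonneg G
  refine abs_le_of_sq_le_sq' ?_ (by positivity) |>.2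
  rw [h]
  nlinarith [mul_nonneg h1 h2]

/-- Cauchy–Schwarz for `⟪F ⊗ G, K⟫`: a bound uniform in the degree, which makes the set of
admissible constants nonempty in every degree. -/
lemma Qform_bdd {d : ℕ} (r : Fin 3 → ℝ) (i j k : Fin 3) :
    ∃ C : ℝ, 0 ≤ C ∧ ∀ (n : ℕ) (F G : Vec d → ℝ), IsSphericalHarmonic d n F →
      IsSphericalHarmonic d n G → |Qform r i j k F G| ≤ C * (L2sq F + L2sq G) := by
  refine ⟨‖(memLp_sphereKernel (d := d) r i j k).toLp _‖, norm_nonneg _, fun n F G hF hG => ?_⟩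
  rw [Qform_eq_inner r i j k (harmonic_continuous hF) (harmonic_continuous hG)]
  refine (abs_real_inner_le_norm _ _).trans ?_
  rw [mul_comm]
  gcongr
  exact norm_tensor_le (harmonic_continuous hF) (harmonic_continuous hG)

lemma isSphericalHarmonic_zero (d n : ℕ) : IsSphericalHarmonic d n 0 :=
  ⟨0, MvPolynomial.isHomogeneous_zero _ _ _, by simp, by simp⟩

/-- If the bound failed for infinitely many degrees, violating pairs would give an orthogonal
family `F_n ⊗ G_n` whose normalized coefficients against the kernel stay above `ε`, contradicting
Bessel's inequality. -/
lemma Qform_small {d : ℕ} (hd : 0 < d) (r : Fin 3 → ℝ) (i j k : Fin 3) {ε : ℝ} (hε : 0 < ε) :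
    ∀ᶠ n : ℕ in Filter.atTop, ∀ F G : Vec d → ℝ, IsSphericalHarmonic d n F →
      IsSphericalHarmonic d n G → |Qform r i j k F G| ≤ ε * (L2sq F + L2sq G) := by
  -- In each degree take a violating pair, if there is one.
  have hex : ∀ n : ℕ, ∃ F G : Vec d → ℝ, IsSphericalHarmonic d n F ∧ IsSphericalHarmonic d n G ∧
      ((∃ F G : Vec d → ℝ, IsSphericalHarmonic d n F ∧ IsSphericalHarmonic d n G ∧
        ε * (L2sq F + L2sq G) < |Qform r i j k F G|) →
        ε * (L2sq F + L2sq G) < |Qform r i j k F G|) := by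
    intro n
    by_cases h : ∃ F G : Vec d → ℝ, IsSphericalHarmonic d n F ∧ IsSphericalHarmonic d n G ∧
        ε * (L2sq F + L2sq G) < |Qform r i j k F G|
    · obtain ⟨F, G, hF, hG, hFG⟩ := h
      exact ⟨F, G, hF, hG, fun _ => hFG⟩
    · exact ⟨0, 0, isSphericalHarmonic_zero d n, isSphericalHarmonic_zero d n,
        fun h' => absurd h' h⟩
  choose F G hF hG hbad using hex
  have hfin := finite_bad
    (fun n => (memLp_tensor (harmonic_continuous (hF n)) (harmonic_continuous (hG n))).toLp _)
    (fun n m hnm => by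
      rw [inner_tensor (harmonic_continuous (hF n)) (harmonic_continuous (hG n))
        (harmonic_continuous (hF m)) (harmonic_continuous (hG m)),
        harmonic_orthogonal hd hnm (hF n) (hF m), zero_mul])
    ((memLp_sphereKernel (d := d) r i j k).toLp _) hε
  have hev := hfin.compl_mem_cofinite
  rw [Nat.cofinite_eq_atTop] at hev
  filter_upwards [hev] with n hn F' G' hF' hG'
  by_contra! hlt
  have h1 := hbad n ⟨F', G', hF', hG', hlt⟩
  refine hn ?_
  rw [Qform_eq_inner r i j k (harmonic_continuous (hF n)) (harmonic_continuous (hG n))] at h1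
  refine lt_of_le_of_lt ?_ h1
  gcongr
  exact norm_tensor_le (harmonic_continuous (hF n)) (harmonic_continuous (hG n))

lemma Qtot_le_of_Qform_le {d : ℕ} {r : Fin 3 → ℝ} {G : Fin 3 → Vec d → ℝ} {a b c : ℝ}
    (ha : 0 ≤ a) (hb : 0 ≤ b) (hc : 0 ≤ c)
    (h0 : |Qform r 1 2 0 (G 1) (G 2)| ≤ a * (L2sq (G 1) + L2sq (G 2)))
    (h1 : |Qform r 2 0 1 (G 2) (G 0)| ≤ b * (L2sq (G 2) + L2sq (G 0)))
    (h2 : |Qform r 0 1 2 (G 0) (G 1)| ≤ c * (L2sq (G 0) + L2sq (G 1))) :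
    |Qtot r G| ≤ (a + b + c) * ∑ j : Fin 3, L2sq (G j) := by
  have p0 := L2sq_nonneg (G 0)
  have p1 := L2sq_nonneg (G 1)
  have p2 := L2sq_nonneg (G 2)
  rw [Fin.sum_univ_three]
  refine (abs_add_three _ _ _).trans ?_
  nlinarith [mul_nonneg ha p0, mul_nonneg hb p1, mul_nonneg hc p2]

/-- Uniform decay of the trilinear spherical form on spherical harmonics of degree `n`
as `n → ∞`. -/
theorem Q_decay_on_spherical_harmonics (d : ℕ) (hd : 2 ≤ d) (r : Fin 3 → ℝ)
    (hr : StrictlyAdmissible r) :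
    ∃ Λ : ℕ → ℝ, (∀ n, 0 ≤ Λ n) ∧ Filter.Tendsto Λ Filter.atTop (nhds 0) ∧
      ∀ n : ℕ, ∀ G : Fin 3 → Vec d → ℝ, (∀ j, IsSphericalHarmonic d n (G j)) →
        |Qtot r G| ≤ Λ n * ∑ j : Fin 3, L2sq (G j) := by
  have hd0 : 0 < d := by omega
  -- `A n` is the set of admissible constants in degree `n`; its infimum is taken as `Λ n`.
  let A : ℕ → Set ℝ := fun n => {a | 0 ≤ a ∧ ∀ G : Fin 3 → Vec d → ℝ,
    (∀ j, IsSphericalHarmonic d n (G j)) → |Qtot r G| ≤ a * ∑ j : Fin 3, L2sq (G j)}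
  have hne : ∀ n, (A n).Nonempty := by
    intro n
    obtain ⟨a, ha, ha'⟩ := Qform_bdd (d := d) r 1 2 0
    obtain ⟨b, hb, hb'⟩ := Qform_bdd (d := d) r 2 0 1
    obtain ⟨c, hc, hc'⟩ := Qform_bdd (d := d) r 0 1 2
    exact ⟨a + b + c, by positivity, fun G hG => Qtot_le_of_Qform_le ha hb hc
      (ha' n _ _ (hG 1) (hG 2)) (hb' n _ _ (hG 2) (hG 0)) (hc' n _ _ (hG 0) (hG 1))⟩
  have hbdd : ∀ n, BddBelow (A n) := fun n => ⟨0, fun a ha => ha.1⟩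
  have hnn : ∀ n, 0 ≤ sInf (A n) := fun n => le_csInf (hne n) fun a ha => ha.1
  refine ⟨fun n => sInf (A n), hnn, ?_, fun n G hG => ?_⟩
  · rw [Metric.tendsto_nhds]
    intro ε hε
    have hε' : 0 < ε / 4 := by positivity
    filter_upwards [Qform_small hd0 r 1 2 0 hε', Qform_small hd0 r 2 0 1 hε',
      Qform_small hd0 r 0 1 2 hε'] with n h0 h1 h2
    have hmem : ε / 4 + ε / 4 + ε / 4 ∈ A n := ⟨by positivity, fun G hG =>
      Qtot_le_of_Qform_le hε'.le hε'.le hε'.le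
        (h0 _ _ (hG 1) (hG 2)) (h1 _ _ (hG 2) (hG 0)) (h2 _ _ (hG 0) (hG 1))⟩
    rw [Real.dist_eq, sub_zero, abs_of_nonneg (hnn n)]
    have := csInf_le (hbdd n) hmem
    linarith
  · -- The infimum is itself an admissible constant.
    have hS : 0 ≤ ∑ j : Fin 3, L2sq (G j) := Finset.sum_nonneg fun j _ => L2sq_nonneg _
    rcases hS.eq_or_lt with h | h
    · obtain ⟨a, ha⟩ := hne n
      have := ha.2 G hG
      rw [← h] at this ⊢
      simpa using this
    · rw [← div_le_iff₀ h]
      exact le_csInf (hne n) fun a ha => (div_le_iff₀ h).mpr (ha.2 G hG)
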